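/- Let w be a nonempty word over a totally ordered alphabet Σ that is not an inverse Lyndon word, and let ICFL(w) = (m1, …, mk). Let u and v be nonempty proper factors of w, given by occurrences w = u1 u u2 = v1 v v2 with |u1| ≠ |v1| (the two occurrences begin at distinct positions of w). Then LCP(u, v) = |lcp(u, v)| ≤ M(w). -/

import Mathlib

/-!
Write `x ≪ y` when `x` and `y` differ at a first position, where `x` has the smaller letter.

The proof rests on one property of `ICFL(w) = (m₁, …, m_k)`: every nonempty suffix `q` of `m_t`
satisfies `q ≪ m_{t+1}` (`IsICFL.chain`). It is proved along the recursion. When `p` becomes a new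
factor, the point is that no nonempty border `q` of `p` is a prefix of `p̄ = r b`
(`IsBRE.suffix_ll`): otherwise `r = q r'`, and since `p r` is inverse Lyndon, comparing its suffix
`q r` with `p r = q r' a ⋯` gives `r ≪ r' b`, so that the suffix `r' b` of `p̄` exceeds `p̄`, although
`p̄` is inverse Lyndon. When `p m₁` is a new factor, `p m₁` is inverse Lyndon and begins with `m₁`,
so a suffix of it longer than `m₁` is either `≪ p m₁` or itself begins with `m₁`, and `m₁ ≪ m₂`.

By transitivity every nonempty suffix of `m₁ ⋯ m_t` is `≪ m_{t+1}` (`ll_of_suffix_flatten`).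
Now let a word `x` occur at positions `i < j`, with `j` inside `m_t`, and suppose
`|x| > |m_t m_{t+1}|`. The occurrence at `j` covers `m_{t+1}`; shifting back by `j - i`, a copy of
`m_{t+1}` starts inside `m₁ ⋯ m_t`, at a nonempty suffix `d` of this product. This contradicts
`d ≪ m_{t+1}`. If `j` lies in the last factor, then `|x| ≤ |m_k|`.
-/

open List

section Defs

variable {α : Type*} [LinearOrder α]

/-- The lexicographic order `x ≺ y` on words over the ordered alphabet `α`. -/
def lexLt (x y : List α) : Prop := List.Lex (· < ·) x y

/-- The inverse `<_in` of the letter order. -/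
def invLt (a b : α) : Prop := b < a

/-- `x ≪ y` : `x ≺ y` and `x` is not a (proper) prefix of `y`. -/
def lexLtLt (x y : List α) : Prop := lexLt x y ∧ ¬ x <+: y

/-- `w` is a Lyndon word with respect to the letter order `r`:
nonempty, primitive, and `≺ᵣ`-smaller than each of its proper nonempty suffixes. -/
def IsLyndonWith (r : α → α → Prop) (w : List α) : Prop :=
  w ≠ [] ∧ (∀ (u : List α) (n : ℕ), w = (List.replicate n u).flatten → n = 1) ∧
  ∀ s : List α, s ≠ [] → s ≠ w → s <:+ w → List.Lex r w s

/-- `L` is the Lyndon factorization of `w` with respect to the letter order `r`: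
a nonempty sequence of Lyndon words, nonincreasing for `≺ᵣ`, whose product is `w`. -/
def IsCFLWith (r : α → α → Prop) (w : List α) (L : List (List α)) : Prop :=
  L ≠ [] ∧ L.flatten = w ∧ (∀ l ∈ L, IsLyndonWith r l) ∧
  List.Chain' (fun x y => ¬ List.Lex r x y) L

/-- an anti-prenecklace: a prefix of a power of an anti-Lyndon word. -/
def IsAntiPrenecklace (z : List α) : Prop :=
  ∃ (l : List α) (k : ℕ), IsLyndonWith invLt l ∧ z <+: (List.replicate k l).flatten

/-- an inverse Lyndon word: each proper nonempty suffix is `≺`-smaller than `w`. -/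
def IsInvLyndon (w : List α) : Prop :=
  w ≠ [] ∧ ∀ s : List α, s ≠ [] → s ≠ w → s <:+ w → lexLt s w

/-- `z` is a border of `w`: a proper prefix and a suffix of `w`. -/
def IsBorder (z w : List α) : Prop := z <+: w ∧ z ≠ w ∧ z <:+ w

/-- `(p, pbar) ∈ Pref_bre(w)`: `p` is an inverse Lyndon word which is a nonempty proper
prefix of `w = p v` and `pbar` is its bounded right extension. -/
def IsBRE (p pbar w : List α) : Prop :=
  IsInvLyndon p ∧ p ≠ [] ∧ p ≠ w ∧
  (∃ v : List α, w = p ++ v ∧ pbar <+: v) ∧ pbar ≠ [] ∧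
  IsInvLyndon pbar ∧
  (∀ z' : List α, z' ≠ [] → z' ≠ pbar → z' <+: pbar → IsInvLyndon (p ++ z')) ∧
  ¬ IsInvLyndon (p ++ pbar) ∧
  lexLt p pbar ∧ ¬ p <+: pbar

/-- The canonical inverse Lyndon factorization `ICFL(w) = M`. -/
inductive IsICFL : List α → List (List α) → Prop
  | base (w : List α) : IsInvLyndon w → IsICFL w [w]
  | ext (w p pbar v m1 : List α) (ms : List (List α)) :
      ¬ IsInvLyndon w → IsBRE p pbar w → w = p ++ v →
      IsICFL v (m1 :: ms) → pbar <+: m1 → IsICFL w (p :: m1 :: ms)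
  | grp (w p pbar v r : List α) (a b : α) (s m1 : List α) (ms : List (List α)) :
      ¬ IsInvLyndon w → IsBRE p pbar w → w = p ++ v →
      p = r ++ a :: s → pbar = r ++ [b] → a < b →
      IsICFL v (m1 :: ms) → m1 <+: r → IsICFL w ((p ++ m1) :: ms)

/-- the longest common prefix of two words. -/
def lcp : List α → List α → List α
  | a :: x, b :: y => if a = b then a :: lcp x y else []
  | _, _ => []

end Defs
section Helpers

variable {α : Type*} [LinearOrder α]

/-- `LL x y` is the relation `x ≪ y`: the words have a first mismatch, where the letter of `x` is
the smaller one. It is given inductively, which makes prefix cancellation and transitivity direct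
inductions. -/
inductive LL : List α → List α → Prop
  | head {a b : α} (s t : List α) : a < b → LL (a :: s) (b :: t)
  | cons (a : α) {s t : List α} : LL s t → LL (a :: s) (a :: t)

theorem LL.append {x y : List α} (h : LL x y) (s t : List α) : LL (x ++ s) (y ++ t) := by
  induction h with
  | head s t h => exact LL.head _ _ h
  | cons a _ ih => exact LL.cons a ih

theorem LL.mono {x y x' y' : List α} (h : LL x y) (hx : x <+: x') (hy : y <+: y') :
    LL x' y' := by
  obtain ⟨s, rfl⟩ := hx
  obtain ⟨t, rfl⟩ := hy
  exact h.append s t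

theorem ll_append_left (r : List α) {x y : List α} (h : LL x y) : LL (r ++ x) (r ++ y) := by
  induction r with
  | nil => exact h
  | cons a r ih => exact LL.cons a ih

theorem LL.irrefl {x : List α} : ¬ LL x x := by
  induction x with
  | nil => intro h; cases h
  | cons a x ih =>
    intro h
    cases h with
    | head _ _ h => exact lt_irrefl _ h
    | cons _ h => exact ih h

theorem LL.of_append_left {r x y : List α} (h : LL (r ++ x) (r ++ y)) : LL x y := by
  induction r with
  | nil => exact h
  | cons a r ih =>
    cases h with
    | head _ _ h => exact absurd h (lt_irrefl _)
    | cons _ h => exact ih h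

theorem LL.trans {x y z : List α} (h : LL x y) (h' : LL y z) : LL x z := by
  induction h generalizing z with
  | head s t h =>
    cases h' with
    | head _ _ h2 => exact LL.head _ _ (h.trans h2)
    | cons _ h2 => exact LL.head _ _ h
  | cons a _ ih =>
    cases h' with
    | head _ _ h2 => exact LL.head _ _ h2
    | cons _ h2 => exact LL.cons _ (ih h2)

/-- Words with a mismatch cannot be prefixes of the same word. -/
theorem LL.ne_append {x y : List α} (h : LL x y) (s t : List α) : x ++ s ≠ y ++ t :=
  fun e => LL.irrefl (e ▸ h.append s t)

theorem LL.exists_mismatch {x y : List α} (h : LL x y) :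
    ∃ r a b s t, x = r ++ a :: s ∧ y = r ++ b :: t ∧ a < b := by
  induction h with
  | head s t h => exact ⟨[], _, _, s, t, rfl, rfl, h⟩
  | cons c _ ih =>
    obtain ⟨r, a, b, s, t, rfl, rfl, h⟩ := ih
    exact ⟨c :: r, a, b, s, t, rfl, rfl, h⟩

theorem lexLt_cases {x y : List α} (h : lexLt x y) : x <+: y ∨ LL x y := by
  unfold lexLt at h
  induction h with
  | nil => exact Or.inl (List.nil_prefix)
  | cons _ ih =>
    rcases ih with h | h
    · exact Or.inl ((List.prefix_cons_inj _).2 h)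
    · exact Or.inr (LL.cons _ h)
  | rel h => exact Or.inr (LL.head _ _ h)

theorem LL.of_prefix {q p y : List α} (h : LL p y) (hq : q <+: p) : q <+: y ∨ LL q y := by
  induction h generalizing q with
  | head s t h =>
    cases q with
    | nil => exact Or.inl List.nil_prefix
    | cons c q =>
      obtain ⟨rfl, -⟩ := List.cons_prefix_cons.1 hq
      exact Or.inr (LL.head _ _ h)
  | cons a _ ih =>
    cases q with
    | nil => exact Or.inl List.nil_prefix
    | cons c q =>
      obtain ⟨rfl, hq'⟩ := List.cons_prefix_cons.1 hq
      rcases ih hq' with h | h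
      · exact Or.inl ((List.prefix_cons_inj _).2 h)
      · exact Or.inr (LL.cons _ h)

theorem IsInvLyndon.suffix_cases {w s : List α} (hw : IsInvLyndon w) (hs : s ≠ [])
    (h : s <:+ w) : s <+: w ∨ LL s w := by
  by_cases e : s = w
  · exact Or.inl (e ▸ List.prefix_rfl)
  · exact lexLt_cases (hw.2 s hs e h)

theorem IsInvLyndon.not_ll {w s : List α} (hw : IsInvLyndon w) (hs : s ≠ [])
    (h : s <:+ w) : ¬ LL w s := by
  intro hl
  rcases hw.suffix_cases hs h with ⟨t, ht⟩ | h'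
  · exact hl.ne_append [] t (by rw [ht, List.append_nil])
  · exact LL.irrefl (hl.trans h')

omit [LinearOrder α] in
theorem suffix_append_cases {q x y : List α} (h : q <:+ x ++ y) :
    q <:+ y ∨ ∃ q', q' ≠ [] ∧ q' <:+ x ∧ q = q' ++ y := by
  obtain ⟨t, ht⟩ := h
  rcases List.append_eq_append_iff.1 ht with ⟨c, rfl, rfl⟩ | ⟨c, rfl, rfl⟩
  · by_cases hc : c = []
    · subst hc
      exact Or.inl (List.suffix_refl _)
    · exact Or.inr ⟨c, hc, List.suffix_append _ _, rfl⟩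
  · exact Or.inl (List.suffix_append _ _)

/-- The bounded right extension ends at the first mismatch with `p`, because `p r b` is already
not inverse Lyndon. -/
theorem IsBRE.exists_mismatch {p pbar w : List α} (h : IsBRE p pbar w) :
    ∃ r a b s, p = r ++ a :: s ∧ pbar = r ++ [b] ∧ a < b := by
  obtain ⟨-, -, -, -, -, -, hz, -, hlt, hnp⟩ := h
  obtain ⟨r, a, b, s, t, rfl, rfl, hab⟩ :=
    ((lexLt_cases hlt).resolve_left hnp).exists_mismatch
  refine ⟨r, a, b, s, rfl, ?_, hab⟩
  by_contra hne
  have h1 := hz (r ++ [b]) (by simp) (fun e => hne e.symm) ⟨t, by simp⟩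
  refine h1.not_ll (s := r ++ [b]) (by simp) (List.suffix_append _ _) ?_
  rw [List.append_assoc]
  exact ll_append_left r (LL.head _ _ hab)

/-- Every nonempty suffix of `p` is `≪ p̄`; in particular no nonempty border of `p` is a prefix
of `p̄`. -/
theorem IsBRE.suffix_ll {p pbar w q : List α} (h : IsBRE p pbar w) (hq : q ≠ [])
    (hqp : q <:+ p) : LL q pbar := by
  obtain ⟨r, a, b, s, hp, hb, hab⟩ := h.exists_mismatch
  obtain ⟨hpI, -, -, -, -, hbI, hz, -, -, -⟩ := h
  have hpb : LL p pbar := by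
    rw [hp, hb]
    exact ll_append_left r (LL.head _ _ hab)
  rcases hpI.suffix_cases hq hqp with h1 | h1
  swap
  · exact h1.trans hpb
  rcases hpb.of_prefix h1 with h2 | h2
  swap
  · exact h2
  exfalso
  have hqr : q <+: r := by
    rw [hb, List.prefix_concat_iff] at h2
    rcases h2 with h2 | h2
    · exact absurd (by rw [h2, ← hb]; exact hpb) (hpI.not_ll hq hqp)
    · exact h2
  obtain ⟨r', rfl⟩ := hqr
  have hprI : IsInvLyndon (p ++ (q ++ r')) := by
    refine hz _ (by simp [hq]) ?_ ⟨[b], by rw [hb]⟩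
    intro e
    have := congrArg List.length (e.trans hb)
    simp at this
  have hsuf : q ++ (q ++ r') <:+ p ++ (q ++ r') := by
    obtain ⟨z, rfl⟩ := hqp
    exact ⟨z, by simp⟩
  have key : LL (q ++ r') (r' ++ [b]) := by
    have hl : LL (r' ++ (a :: s ++ (q ++ r'))) (r' ++ [b]) := ll_append_left r' (LL.head _ _ hab)
    have e : p ++ (q ++ r') = q ++ (r' ++ (a :: s ++ (q ++ r'))) := by simp [hp]
    have h3 := hprI.suffix_cases (by simp [hq]) hsuf
    rw [e] at h3
    rcases h3 with h3 | h3
    · rw [List.prefix_append_right_inj] at h3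
      -- `q` is nonempty, so the prefix `q r'` of `r' a ⋯` is long enough to contain `r' a`
      have h4 : r' ++ [a] <+: q ++ r' := by
        refine List.prefix_of_prefix_length_le (l₃ := r' ++ (a :: s ++ (q ++ r')))
          ⟨s ++ (q ++ r'), by simp⟩ h3 ?_
        have := List.length_pos_of_ne_nil hq
        simp
        omega
      exact (ll_append_left r' (LL.head [] [] hab)).mono h4 List.prefix_rfl
    · exact h3.of_append_left.trans hl
  refine hbI.not_ll (s := r' ++ [b]) (by simp) ⟨q, by rw [hb]; simp⟩ ?_
  rw [hb]
  exact key.mono (List.prefix_append _ _) List.prefix_rfl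

/-- Consecutive factors `m`, `m'` are so related that every nonempty suffix of `m` is `≪ m'`. -/
def SufLL (m m' : List α) : Prop := ∀ q : List α, q ≠ [] → q <:+ m → LL q m'

theorem IsICFL.flatten {w : List α} {M : List (List α)} (h : IsICFL w M) : M.flatten = w := by
  induction h with
  | base w _ => simp
  | ext w p pbar v m1 ms _ _ hw _ _ ih => rw [hw, ← ih]; simp
  | grp w p pbar v r a b s m1 ms _ _ hw _ _ _ _ _ ih => rw [hw, ← ih]; simp

theorem IsICFL.ne_nil {w : List α} {M : List (List α)} (h : IsICFL w M) : ∀ m ∈ M, m ≠ [] := by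
  induction h with
  | base w hw => simpa using hw.1
  | ext w p pbar v m1 ms _ hb hw _ _ ih =>
    intro m hm
    rcases List.mem_cons.1 hm with rfl | hm
    · exact hb.2.1
    · exact ih m hm
  | grp w p pbar v r a b s m1 ms _ hb hw _ _ _ _ _ ih =>
    intro m hm
    rcases List.mem_cons.1 hm with rfl | hm
    · simp [hb.2.1]
    · exact ih m (List.mem_cons_of_mem _ hm)

/-- In the grouping step the first factor `m₁` of `v` is shorter than `p̄`, hence is not all
of `v`. -/
theorem grp_ne_nil {w p pbar v r m1 : List α} {b : α} {ms : List (List α)}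
    (hb : IsBRE p pbar w) (hw : w = p ++ v) (hpb : pbar = r ++ [b])
    (hv : IsICFL v (m1 :: ms)) (hm : m1 <+: r) : ms ≠ [] := by
  rintro rfl
  obtain ⟨-, -, -, ⟨v', hv', hpre⟩, -⟩ := hb
  have e : v' = v := List.append_cancel_left (hv'.symm.trans hw)
  have hf := hv.flatten
  simp only [List.flatten_cons, List.flatten_nil, List.append_nil] at hf
  have h1 := hpre.length_le
  have h2 := hm.length_le
  rw [e, ← hf, hpb] at h1
  simp at h1
  omega

/-- Consecutive factors of the canonical inverse Lyndon factorization satisfy `SufLL`. -/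
theorem IsICFL.chain {w : List α} {M : List (List α)} (h : IsICFL w M) :
    List.IsChain SufLL M := by
  induction h with
  | base w _ => exact List.isChain_singleton _
  | ext w p pbar v m1 ms _ hb hw _ hpre ih =>
    refine List.isChain_cons_cons.2 ⟨?_, ih⟩
    intro q hq hqp
    exact (hb.suffix_ll hq hqp).mono List.prefix_rfl hpre
  | grp w p pbar v r a b s m1 ms _ hb hw hp hpb hab hv hm ih =>
    have hms := grp_ne_nil hb hw hpb hv hm
    obtain ⟨m2, ms, rfl⟩ := List.exists_cons_of_ne_nil hms
    obtain ⟨h12, ih⟩ := List.isChain_cons_cons.1 ih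
    refine List.isChain_cons_cons.2 ⟨?_, ih⟩
    have hm1 : m1 ≠ [] := hv.ne_nil m1 (by simp)
    have hll : LL m1 m2 := h12 m1 hm1 List.suffix_rfl
    have hm1p : m1 <+: p ++ m1 := by
      rw [hp]
      exact (hm.trans (List.prefix_append _ _)).trans (List.prefix_append _ _)
    have hI : IsInvLyndon (p ++ m1) := by
      refine hb.2.2.2.2.2.2.1 m1 hm1 ?_ ?_
      · rintro rfl
        have := hm.length_le
        rw [hpb] at this
        simp at this
      · rw [hpb]
        exact hm.trans (List.prefix_append _ _)
    intro q hq hqs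
    rcases suffix_append_cases hqs with h | ⟨q', -, -, rfl⟩
    · exact h12 q hq h
    · rcases hI.suffix_cases hq hqs with h | h
      · exact hll.mono (List.prefix_of_prefix_length_le hm1p h (by simp)) List.prefix_rfl
      · exact h.trans (hll.mono hm1p List.prefix_rfl)

/-- The property of adjacent factors propagates to all suffixes of a product of initial
factors. -/
theorem ll_of_suffix_flatten {A B : List (List α)} {m q : List α}
    (hc : List.IsChain SufLL (A ++ m :: B)) (hne : ∀ x ∈ A, x ≠ []) (hq : q ≠ [])
    (h : q <:+ A.flatten) : LL q m := by
  induction A generalizing q with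
  | nil =>
    simp at h
    exact absurd h hq
  | cons c A ih =>
    have hcA : List.IsChain SufLL (A ++ m :: B) := by
      rw [List.cons_append] at hc
      exact hc.tail
    have ih' := fun {q : List α} => ih (q := q) hcA (fun x hx => hne x (List.mem_cons_of_mem _ hx))
    rw [List.flatten_cons] at h
    rcases suffix_append_cases h with h | ⟨q', hq', hqc, rfl⟩
    · exact ih' hq h
    · cases A with
      | nil =>
        simp only [List.cons_append, List.nil_append] at hc
        simpa using (List.isChain_cons_cons.1 hc).1 q' hq' hqc
      | cons d A =>
        simp only [List.cons_append] at hc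
        have h1 : LL q' d := (List.isChain_cons_cons.1 hc).1 q' hq' hqc
        have hd : d ≠ [] := hne d (by simp)
        refine LL.trans (h1.mono (List.prefix_append _ _) ?_)
          (ih' (q := (d :: A).flatten) (by simp [hd]) List.suffix_rfl)
        rw [List.flatten_cons]
        exact List.prefix_append _ _

omit [LinearOrder α] in
/-- Locates the factor of `M` containing a given position of `M.flatten`. -/
theorem exists_factor_at {M : List (List α)} {x y : List α} (h : M.flatten = x ++ y)
    (hy : y ≠ []) :
    ∃ A m B o o', M = A ++ m :: B ∧ x = A.flatten ++ o ∧ m = o ++ o' ∧ y = o' ++ B.flatten := by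
  induction M generalizing x with
  | nil =>
    simp at h
    exact absurd h.2 hy
  | cons c M ih =>
    rw [List.flatten_cons] at h
    rcases List.append_eq_append_iff.1 h with ⟨d, rfl, h2⟩ | ⟨d, rfl, h2⟩
    · obtain ⟨A, m, B, o, o', rfl, rfl, rfl, h3⟩ := ih h2
      exact ⟨c :: A, _, B, o, o', rfl, by simp, rfl, h3⟩
    · exact ⟨[], _, M, x, d, rfl, by simp, rfl, h2⟩

/-- The bound for a word `x` with two occurrences, stated for any list with the suffix property. -/
theorem repeat_length_le {M : List (List α)} (hc : List.IsChain SufLL M)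
    (hne : ∀ m ∈ M, m ≠ []) (hlen : 2 ≤ M.length) {x u1 u2 v1 v2 : List α}
    (h1 : M.flatten = u1 ++ (x ++ u2)) (h2 : M.flatten = v1 ++ (x ++ v2))
    (hlt : u1.length < v1.length) :
    x.length ≤ (Finset.range (M.length - 1)).sup (fun t => (M[t]! ++ M[t+1]!).length) := by
  by_cases hx : x = []
  · simp [hx]
  obtain ⟨A, m, B, o, o', rfl, rfl, rfl, hxB⟩ := exists_factor_at h2 (by simp [hx])
  cases B with
  | nil =>
    rcases List.eq_nil_or_concat A with rfl | ⟨A', c, rfl⟩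
    · simp at hlen
    refine le_trans ?_ (Finset.le_sup (b := A'.length) (by simp))
    have := congrArg List.length hxB
    simp at this ⊢
    omega
  | cons n B =>
    refine le_trans ?_ (Finset.le_sup (b := A.length) (by simp))
    suffices x.length ≤ (o ++ o' ++ n).length by
      simpa [List.getElem!_eq_getElem?_getD] using this
    by_contra hcon
    have hpre : o' ++ n <+: x := by
      refine List.prefix_of_prefix_length_le (l₃ := x ++ v2) ⟨B.flatten, by simp [hxB]⟩
        (List.prefix_append _ _) ?_
      simp at hcon ⊢
      omega
    obtain ⟨x', rfl⟩ := hpre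
    rw [h1] at h2
    obtain ⟨d, hd⟩ : u1 <+: A.flatten ++ o :=
      List.prefix_of_prefix_length_le ⟨_, h2⟩ (List.prefix_append _ _) hlt.le
    have hd0 : d ≠ [] := by
      rintro rfl
      rw [← hd] at hlt
      simp at hlt
    rw [← hd, List.append_assoc u1, List.append_cancel_left_eq] at h2
    -- `d` is the shift `j - i`; moving it past `o'` yields the suffix `d'` of `A.flatten ++ m`
    obtain ⟨d', hd'⟩ : o' <+: d ++ o' :=
      List.prefix_of_prefix_length_le (l₃ := o' ++ n ++ x' ++ u2) ⟨n ++ x' ++ u2, by simp⟩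
        ⟨n ++ x' ++ v2, by rw [h2]; simp⟩ (by simp)
    have hdne : d' ≠ [] := by
      rintro rfl
      have h3 := congrArg List.length hd'
      have h4 := List.length_pos_of_ne_nil hd0
      simp only [List.append_nil, List.length_append] at h3
      omega
    have e : o' ++ (d' ++ (n ++ (x' ++ v2))) = o' ++ (n ++ (x' ++ u2)) := by
      rw [← List.append_assoc, hd']
      simpa using h2.symm
    have hll : LL d' n := by
      refine ll_of_suffix_flatten (A := A ++ [o ++ o']) (B := B) (by simpa using hc) ?_ hdne ?_
      · intro y hy
        apply hne
        simp at hy ⊢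
        tauto
      · refine ⟨u1 ++ o', ?_⟩
        rw [List.append_assoc, hd', ← List.append_assoc, hd]
        simp
    exact hll.ne_append _ _ (List.append_cancel_left e)

theorem lcp_prefix (u v : List α) : lcp u v <+: u ∧ lcp u v <+: v := by
  induction u generalizing v with
  | nil => simp [lcp]
  | cons a u ih =>
    cases v with
    | nil => simp [lcp]
    | cons b v =>
      by_cases h : a = b
      · subst h
        simpa [lcp] using ih v
      · simp [lcp, h]

end Helpers

/-- Proposition `lcpfattori`: with `ICFL(w) = (m₁, …, m_k)`, for nonempty proper
factors `u`, `v` of `w` occurring at distinct positions,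
`LCP(u, v) ≤ M(w) = max_t |m_t m_{t+1}|`. -/
theorem stmt19 {α : Type*} [LinearOrder α] (w : List α) (hw : w ≠ [])
    (hwn : ¬ IsInvLyndon w)
    (M : List (List α)) (hM : IsICFL w M)
    (u v u1 u2 v1 v2 : List α)
    (hu : u ≠ []) (hv : v ≠ []) (huw : u ≠ w) (hvw : v ≠ w)
    (hocc1 : w = u1 ++ u ++ u2) (hocc2 : w = v1 ++ v ++ v2)
    (hpos : u1.length ≠ v1.length) :
    (lcp u v).length ≤
      (Finset.range (M.length - 1)).sup (fun t => (M[t]! ++ M[t+1]!).length) := by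
  have hlen : 2 ≤ M.length := by
    cases hM with
    | base _ h => exact absurd h hwn
    | ext => simp
    | grp _ p pbar v r a b s m1 ms _ hb hw _ hpb _ hv hm =>
      have := List.length_pos_of_ne_nil (grp_ne_nil hb hw hpb hv hm)
      simp
      omega
  obtain ⟨⟨u', hu'⟩, ⟨v', hv'⟩⟩ := lcp_prefix u v
  have e1 : M.flatten = u1 ++ (lcp u v ++ (u' ++ u2)) := by
    rw [hM.flatten, ← List.append_assoc (lcp u v), hu', hocc1, List.append_assoc]
  have e2 : M.flatten = v1 ++ (lcp u v ++ (v' ++ v2)) := by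
    rw [hM.flatten, ← List.append_assoc (lcp u v), hv', hocc2, List.append_assoc]
  rcases lt_or_gt_of_ne hpos with h | h
  · exact repeat_length_le hM.chain hM.ne_nil hlen e1 e2 h
  · exact repeat_length_le hM.chain hM.ne_nil hlen e2 e1 h
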